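/- arXiv:1909.05579 — 3 statements merged into one kernel-verified Lean document; each statement's English description precedes it below -/
import Mathlib

section
/- Let R be a commutative ring and let a_0, a_1, a_2, a_3, b_0, b_1, b_2, b_3 ∈ R. For 0 ≤ i, j ≤ 3 set [ij] := a_i·b_j − a_j·b_i. Then the determinant of the 3×3 matrix with rows ([03], [02], [01]), ([13], [12]+[03], [02]), ([23], [13], [03]) equals the determinant of the 6×6 Sylvester matrix with rows (a_0, a_1, a_2, a_3, 0, 0), (0, a_0, a_1, a_2, a_3, 0), (0, 0, a_0, a_1, a_2, a_3), (b_0, b_1, b_2, b_3, 0, 0), (0, b_0, b_1, b_2, b_3, 0), (0, 0, b_0, b_1, b_2, b_3), i.e. equals the resultant of the two binary cubic forms f = a_0x_0^3 + a_1x_0^2x_1 + a_2x_0x_1^2 + a_3x_1^3 and g = b_0x_0^3 + b_1x_0^2x_1 + b_2x_0x_1^2 + b_3x_1^3. -/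
/-- The determinant of the 3 × 3 Chow-complex matrix of the twisted cubic, with the
Plücker coordinate `[ij]` specialized to `aᵢbⱼ - aⱼbᵢ`, equals the determinant of the
6 × 6 Sylvester matrix of the two binary cubics
`f = a₀x₀³ + a₁x₀²x₁ + a₂x₀x₁² + a₃x₁³` and `g = b₀x₀³ + b₁x₀²x₁ + b₂x₀x₁² + b₃x₁³`,
i.e. the resultant of `f` and `g`. -/
theorem chow_matrix_det_eq_sylvester_det {R : Type*} [CommRing R]
    (a b : Fin 4 → R) :
    (Matrix.det
      !![a 0 * b 3 - a 3 * b 0, a 0 * b 2 - a 2 * b 0, a 0 * b 1 - a 1 * b 0;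
         a 1 * b 3 - a 3 * b 1, (a 1 * b 2 - a 2 * b 1) + (a 0 * b 3 - a 3 * b 0),
           a 0 * b 2 - a 2 * b 0;
         a 2 * b 3 - a 3 * b 2, a 1 * b 3 - a 3 * b 1, a 0 * b 3 - a 3 * b 0]) =
    (Matrix.det
      !![a 0, a 1, a 2, a 3, 0, 0;
         0, a 0, a 1, a 2, a 3, 0;
         0, 0, a 0, a 1, a 2, a 3;
         b 0, b 1, b 2, b 3, 0, 0;
         0, b 0, b 1, b 2, b 3, 0;
         0, 0, b 0, b 1, b 2, b 3]) := by
  -- Both sides are integer polynomials in the `aᵢ`, `bⱼ`; Laplace expansion along first rows,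
  -- short because the Sylvester matrix is sparse, reduces the claim to a polynomial identity.
  rw [Matrix.det_fin_three]
  simp [Matrix.det_succ_row_zero, Fin.sum_univ_succ, Fin.succAbove]
  ring
end

section
/- Let Q_1, Q_2, Q_3, Q_4 be quadratic forms in ℂ[x_0, x_1, x_2, x_3] and let M = M(Q_1, Q_2, Q_3, Q_4) be their Nanson matrix. Then det M = 0 if and only if there exists a nonzero point p ∈ ℂ^4 with Q_1(p) = Q_2(p) = Q_3(p) = Q_4(p) = 0. -/
/-!
Write `J` for the Jacobian determinant of four quaternary quadrics `Q`, and `(Q)` for the ideal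
they generate. Euler's identity says that the Jacobian matrix applied to `(x₀, …, x₃)` is `2Q`, so
Cramer's rule gives `xₖ J = 2 ∑ᵢ adjₖᵢ Qᵢ`; differentiating, `xₖ ∂ₗJ ≡ δₖₗ J` modulo `(Q)`
(`X_mul_pderiv_jacobian_sub_mem`).

If `p ≠ 0` is a common zero, these congruences show that `J` and all `∂ₗJ` vanish at `p`. Hence all
twenty cubics vanish at `p`, and the vector of cubic monomials at `p` lies in the kernel of the
matrix.

Conversely, suppose that there is no common nontrivial zero, and take a linear relation
`∑ᵢ LᵢQᵢ + ∑ₗ bₗ ∂ₗJ = 0` between the rows, with linear forms `Lᵢ`. Multiplying by `xₖ` gives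
`bₖ J ∈ (Q)`. Two facts about the complete intersection `(Q)` (`complete_intersection`) finish the
proof: `J ∉ (Q)`, so `b = 0`; and `∑ᵢ LᵢQᵢ = 0` forces `Lᵢ ∈ (Q)`, so `Lᵢ = 0` because `(Q)` starts
in degree 2.

These two facts are proved in the local ring at the origin (`complete_intersection_local`). By the
Nullstellensatz each `xᵢ` is in the radical of `(Q)`. Starting from the regular sequence
`x₃, x₂, x₁, x₀`, the variables are replaced one at a time by linear combinations `q₀, …, q₃` of
the `Qᵢ`, keeping the sequence regular: no associated prime of the remaining elements contains all
`Qᵢ`, and a vector space over an infinite field is not a finite union of proper subspaces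
(`exists_exchange`). In a local ring a regular sequence may be permuted, so all four variables can
be replaced. Regularity of `q₀, …, q₃` puts every syzygy into the ideal (`syzygy_mem`), and
in particular makes the change from `Q` to `q` invertible. Finally, if `q = Ax` and `det A ∈ (q)`,
expanding the leading principal minors of `A` one after another and cancelling `q₃, q₂, q₁, q₀` by
the regularity of the intermediate sequences leads to `1 ∈ (x₀, …, x₃)`, which is absurd
(`one_mem_of_det_mem`).
-/

open MvPolynomial

/-- The exponent vectors of the 20 degree-3 monomials in `x₀, x₁, x₂, x₃`, in a fixed order. -/
noncomputable def cubicExp : Fin 20 → (Fin 4 →₀ ℕ) := fun m =>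
  Finsupp.equivFunOnFinite.symm
    (![![3,0,0,0], ![2,1,0,0], ![2,0,1,0], ![2,0,0,1],
       ![1,2,0,0], ![1,1,1,0], ![1,1,0,1], ![1,0,2,0], ![1,0,1,1], ![1,0,0,2],
       ![0,3,0,0], ![0,2,1,0], ![0,2,0,1], ![0,1,2,0], ![0,1,1,1], ![0,1,0,2],
       ![0,0,3,0], ![0,0,2,1], ![0,0,1,2], ![0,0,0,3]] m)

/-- The twenty cubic forms of Nanson's construction: the sixteen products `xⱼ · Qᵢ`
and the four partial derivatives of the Jacobian determinant of `Q₁, …, Q₄`. -/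
noncomputable def nansonRow {K : Type*} [CommRing K]
    (Q : Fin 4 → MvPolynomial (Fin 4) K) : Fin 20 → MvPolynomial (Fin 4) K := fun r =>
  if h : (r : ℕ) < 16 then
    X (⟨(r : ℕ) % 4, by omega⟩ : Fin 4) * Q ⟨(r : ℕ) / 4, by omega⟩
  else
    pderiv (⟨(r : ℕ) - 16, by omega⟩ : Fin 4)
      (Matrix.det (Matrix.of fun i j : Fin 4 => pderiv j (Q i)))

/-- Nanson's 20 × 20 matrix of four quaternary quadrics: the coefficient matrix of the
twenty cubics `nansonRow Q` with respect to the twenty degree-3 monomials. -/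
noncomputable def nansonMatrix {K : Type*} [CommRing K]
    (Q : Fin 4 → MvPolynomial (Fin 4) K) : Matrix (Fin 20) (Fin 20) K :=
  Matrix.of fun r c => coeff (cubicExp c) (nansonRow Q r)

open RingTheory.Sequence

/-! ### Regular sequences and exchange -/

lemma weaklyRegular_concat_iff {R : Type*} [CommRing R] (rs : List R) (r : R) :
    IsWeaklyRegular R (rs ++ [r]) ↔ IsWeaklyRegular R rs ∧
      ∀ u, u * r ∈ Ideal.ofList rs → u ∈ Ideal.ofList rs := by
  rw [isWeaklyRegular_append_iff, isWeaklyRegular_singleton_iff]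
  refine and_congr_right fun _ => ?_
  rw [isSMulRegular_iff_right_eq_zero_of_smul]
  constructor
  · intro h u hu
    have := h (Submodule.Quotient.mk u) (by
      rw [← Submodule.Quotient.mk_smul, Submodule.Quotient.mk_eq_zero]
      simpa [mul_comm] using hu)
    rw [Submodule.Quotient.mk_eq_zero] at this
    simpa using this
  · intro h u
    obtain ⟨u, rfl⟩ := Submodule.Quotient.mk_surjective _ u
    rw [← Submodule.Quotient.mk_smul, Submodule.Quotient.mk_eq_zero, Submodule.Quotient.mk_eq_zero]
    intro hu
    have := h u (by simpa [mul_comm] using hu)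
    simpa using this

/-- If `x` lies in the radical of the ideal generated by `Q`, then in a regular sequence ending in
`x` the last element can be replaced by some `k`-linear combination of the `Q i`. -/
lemma exists_exchange {k R : Type*} [Field k] [Infinite k] [CommRing R] [IsNoetherianRing R]
    [Algebra k R] {n : ℕ} (Q : Fin n → R) (rs : List R) (x : R)
    (hx : x ∈ (Ideal.span (Set.range Q)).radical)
    (h : IsWeaklyRegular R (rs ++ [x])) :
    ∃ c : Fin n → k, IsWeaklyRegular R (rs ++ [∑ i, c i • Q i]) := by
  rw [weaklyRegular_concat_iff] at h
  obtain ⟨hrs, hreg⟩ := h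
  set I := Ideal.ofList rs
  let L : (Fin n → k) →ₗ[k] R := Fintype.linearCombination k Q
  let F : Ideal R → Subspace k (Fin n → k) := fun P => (P.restrictScalars k).comap L
  have hfin := associatedPrimes.finite R (R ⧸ I)
  have hcov := Subspace.biUnion_ne_univ_of_top_notMem (s := hfin.toFinset.image F) (by
    classical
    intro htop
    rw [Finset.mem_image] at htop
    obtain ⟨P, hP, hPt⟩ := htop
    rw [Set.Finite.mem_toFinset] at hP
    have hprime : P.IsPrime := hP.1
    have hQ : Ideal.span (Set.range Q) ≤ P := by
      rw [Ideal.span_le]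
      rintro _ ⟨i, rfl⟩
      have : (Pi.single i 1 : Fin n → k) ∈ F P := by rw [hPt]; trivial
      simpa [F, L] using this
    -- `x` would lie in an associated prime of `R ⧸ I`, but it is regular there
    have hxP : x ∈ P := hprime.radical_le_iff.mpr hQ hx
    have hzd : x ∈ ⋃ p ∈ associatedPrimes R (R ⧸ I), (p : Set R) := by
      simp only [Set.mem_iUnion]
      exact ⟨P, hP, hxP⟩
    rw [biUnion_associatedPrimes_eq_zero_divisors] at hzd
    obtain ⟨u, hu0, hu⟩ := hzd
    obtain ⟨u, rfl⟩ := Ideal.Quotient.mk_surjective u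
    apply hu0
    rw [Ideal.Quotient.eq_zero_iff_mem]
    apply hreg
    rw [← Ideal.Quotient.eq_zero_iff_mem, mul_comm]
    exact hu)
  obtain ⟨c, hc⟩ := (Set.ne_univ_iff_exists_notMem _).mp hcov
  refine ⟨c, ?_⟩
  rw [weaklyRegular_concat_iff]
  refine ⟨hrs, fun u hu => ?_⟩
  by_contra hnu
  apply hc
  have hzd : (∑ i, c i • Q i) ∈ ⋃ p ∈ associatedPrimes R (R ⧸ I), (p : Set R) := by
    rw [biUnion_associatedPrimes_eq_zero_divisors]
    refine ⟨Ideal.Quotient.mk I u, ?_, ?_⟩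
    · rwa [Ne, Ideal.Quotient.eq_zero_iff_mem]
    · rw [mul_comm] at hu
      exact Ideal.Quotient.eq_zero_iff_mem.mpr hu
  simp only [Set.mem_iUnion] at hzd ⊢
  obtain ⟨P, hP, hm⟩ := hzd
  refine ⟨F P, Finset.mem_image_of_mem _ (hfin.mem_toFinset.mpr hP), ?_⟩
  simpa [F, L, Fintype.linearCombination_apply] using hm

lemma weaklyRegular_X (k : Type*) [Field k] :
    IsWeaklyRegular (MvPolynomial (Fin 4) k)
      ([X 3, X 2, X 1, X 0] : List (MvPolynomial (Fin 4) k)) := by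
  have key : ∀ (s : List (Fin 4)) (j : Fin 4), j ∉ s →
      ∀ u : MvPolynomial (Fin 4) k,
        u * X j ∈ Ideal.ofList (s.map X) → u ∈ Ideal.ofList (s.map X) := by
    intro s j hj u hu
    have e : Ideal.ofList (s.map (X : Fin 4 → MvPolynomial (Fin 4) k)) = 
        Ideal.span (X '' {i | i ∈ s}) := by
      unfold Ideal.ofList; congr 1; ext; simp
    rw [e, mem_ideal_span_X_image] at hu ⊢
    intro m hm
    obtain ⟨i, hi, hmi⟩ := hu (m + Finsupp.single j 1) (by
      rw [mem_support_iff] at hm ⊢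
      rwa [coeff_mul_X])
    refine ⟨i, hi, ?_⟩
    have : j ≠ i := by rintro rfl; exact hj hi
    simpa [Finsupp.single_apply, this] using hmi
  have h0 := IsWeaklyRegular.nil (MvPolynomial (Fin 4) k) (MvPolynomial (Fin 4) k)
  have h1 := (weaklyRegular_concat_iff _ _).mpr ⟨h0, key [] 3 (by simp)⟩
  have h2 := (weaklyRegular_concat_iff _ _).mpr ⟨h1, key [3] 2 (by simp)⟩
  have h3 := (weaklyRegular_concat_iff _ _).mpr ⟨h2, key [3, 2] 1 (by simp)⟩
  exact (weaklyRegular_concat_iff _ _).mpr ⟨h3, key [3, 2, 1] 0 (by simp)⟩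

/-! ### Syzygies and determinants of regular sequences of length four -/

lemma mem_ofList3 {R : Type*} [CommRing R] {a b c u : R} :
    u ∈ Ideal.ofList [a, b, c] ↔ ∃ r s t, u = r * a + s * b + t * c := by
  simp only [Ideal.ofList_cons, Ideal.ofList_nil, sup_bot_eq, Submodule.mem_sup,
    Ideal.mem_span_singleton']
  constructor
  · rintro ⟨_, ⟨r, rfl⟩, _, ⟨_, ⟨s, rfl⟩, _, ⟨t, rfl⟩, rfl⟩, rfl⟩
    exact ⟨r, s, t, by ring⟩
  · rintro ⟨r, s, t, rfl⟩
    exact ⟨_, ⟨r, rfl⟩, _, ⟨_, ⟨s, rfl⟩, _, ⟨t, rfl⟩, rfl⟩, by ring⟩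

lemma mem_ofList4 {R : Type*} [CommRing R] {a b c d u : R} :
    u ∈ Ideal.ofList [a, b, c, d] ↔ ∃ r s t w, u = r * a + s * b + t * c + w * d := by
  rw [Ideal.ofList_cons, Submodule.mem_sup]
  simp only [Ideal.mem_span_singleton', mem_ofList3]
  constructor
  · rintro ⟨_, ⟨r, rfl⟩, _, ⟨s, t, w, rfl⟩, rfl⟩
    exact ⟨r, s, t, w, by ring⟩
  · rintro ⟨r, s, t, w, rfl⟩
    exact ⟨_, ⟨r, rfl⟩, _, ⟨s, t, w, rfl⟩, by ring⟩

/-- If `q = A x` and the variables `x 0, …, x 3` can be exchanged successively for `q 0, …, q 3`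
with each `q i` regular modulo the other three elements, then `det A` lies in `(q)` only when `(x)`
is the unit ideal. -/
lemma one_mem_of_det_mem {R : Type*} [CommRing R] (x q : Fin 4 → R) (A : Matrix (Fin 4) (Fin 4) R)
    (hq : q = A.mulVec x)
    (h0 : ∀ u, u * q 0 ∈ Ideal.ofList [x 3, x 2, x 1] → u ∈ Ideal.ofList [x 3, x 2, x 1])
    (h1 : ∀ u, u * q 1 ∈ Ideal.ofList [x 3, x 2, q 0] → u ∈ Ideal.ofList [x 3, x 2, q 0])
    (h2 : ∀ u, u * q 2 ∈ Ideal.ofList [x 3, q 0, q 1] → u ∈ Ideal.ofList [x 3, q 0, q 1])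
    (h3 : ∀ u, u * q 3 ∈ Ideal.ofList [q 0, q 1, q 2] → u ∈ Ideal.ofList [q 0, q 1, q 2])
    (hdet : A.det ∈ Ideal.ofList [q 0, q 1, q 2, q 3]) :
    (1 : R) ∈ Ideal.ofList [x 3, x 2, x 1, x 0] := by
  have e : ∀ i, q i = A i 0 * x 0 + A i 1 * x 1 + A i 2 * x 2 + A i 3 * x 3 := by
    intro i; rw [hq]; simp [Matrix.mulVec, dotProduct, Fin.sum_univ_four]
  -- cofactors of the last column; `m3 3` is the leading principal 3 × 3 minor
  set m3 : Fin 4 → R := fun i => A.adjugate 3 i with hm3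
  have c3 : ∑ i, m3 i * q i = A.det * x 3 := by
    have := congrFun (congrArg (fun B => B.mulVec x) A.adjugate_mul) 3
    simp only [← Matrix.mulVec_mulVec, ← hq] at this
    rw [Matrix.smul_mulVec, Matrix.one_mulVec] at this
    simpa [Matrix.mulVec, dotProduct] using this
  rw [Fin.sum_univ_four] at c3
  have m33 : m3 3 = A 0 0 * (A 1 1 * A 2 2 - A 1 2 * A 2 1)
      - A 0 1 * (A 1 0 * A 2 2 - A 1 2 * A 2 0) + A 0 2 * (A 1 0 * A 2 1 - A 1 1 * A 2 0) := by
    rw [hm3]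
    simp only [Matrix.adjugate_fin_succ_eq_det_submatrix, Matrix.det_fin_three]
    simp [Fin.succAbove, Fin.lt_def]
    ring
  rw [mem_ofList4] at hdet
  obtain ⟨a, b, c, d, hd⟩ := hdet
  have s3 := h3 (m3 3 - d * x 3) (mem_ofList3.mpr
    ⟨a * x 3 - m3 0, b * x 3 - m3 1, c * x 3 - m3 2, by linear_combination c3 + x 3 * hd⟩)
  rw [m33, mem_ofList3] at s3
  obtain ⟨r, s, t, hs⟩ := s3
  -- cofactor expansion of the leading 3 × 3 minor, then of the 2 × 2 and 1 × 1 ones: in each step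
  -- the minor times the variable is rewritten through `q` and the last `q` is cancelled
  have s2 := h2 (A 0 0 * A 1 1 - A 0 1 * A 1 0 - t * x 2) (mem_ofList3.mpr
    ⟨d * x 2 + (A 0 3 * (A 1 0 * A 2 1 - A 1 1 * A 2 0) - A 1 3 * (A 0 0 * A 2 1 - A 0 1 * A 2 0)
        + A 2 3 * (A 0 0 * A 1 1 - A 0 1 * A 1 0)),
     r * x 2 - (A 1 0 * A 2 1 - A 1 1 * A 2 0),
     s * x 2 + (A 0 0 * A 2 1 - A 0 1 * A 2 0), by
      have e0 := e 0
      have e1 := e 1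
      have e2 := e 2
      linear_combination x 2 * hs + (A 1 0 * A 2 1 - A 1 1 * A 2 0) * e0
        - (A 0 0 * A 2 1 - A 0 1 * A 2 0) * e1 + (A 0 0 * A 1 1 - A 0 1 * A 1 0) * e2⟩)
  rw [mem_ofList3] at s2
  obtain ⟨r', s', t', hs'⟩ := s2
  have s1 := h1 (A 0 0 - t' * x 1) (mem_ofList3.mpr
    ⟨r' * x 1 + (A 0 0 * A 1 3 - A 0 3 * A 1 0), t * x 1 + (A 0 0 * A 1 2 - A 0 2 * A 1 0),
     s' * x 1 + A 1 0, by
      linear_combination x 1 * hs' - A 1 0 * e 0 + A 0 0 * e 1⟩)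
  rw [mem_ofList3] at s1
  obtain ⟨r'', s'', t'', hs''⟩ := s1
  have s0 := h0 (1 - t'' * x 0) (mem_ofList3.mpr
    ⟨r'' * x 0 + A 0 3, s'' * x 0 + A 0 2, t' * x 0 + A 0 1, by
      linear_combination x 0 * hs'' + e 0⟩)
  rw [mem_ofList3] at s0
  obtain ⟨α, β, γ, hf⟩ := s0
  exact mem_ofList4.mpr ⟨α, β, γ, t'', by linear_combination hf⟩

/-- Every syzygy of a regular sequence has its coefficients in the ideal of the sequence. -/
lemma syzygy_mem {R : Type*} [CommRing R] (q : Fin 4 → R)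
    (h : IsWeaklyRegular R [q 0, q 1, q 2, q 3]) (u : Fin 4 → R) (hu : ∑ i, u i * q i = 0)
    (i : Fin 4) :
    u i ∈ Ideal.ofList [q 0, q 1, q 2, q 3] := by
  obtain ⟨h', h3⟩ := (weaklyRegular_concat_iff [q 0, q 1, q 2] (q 3)).mp h
  obtain ⟨h', h2⟩ := (weaklyRegular_concat_iff [q 0, q 1] (q 2)).mp h'
  obtain ⟨h', h1⟩ := (weaklyRegular_concat_iff [q 0] (q 1)).mp h'
  obtain ⟨-, h0⟩ := (weaklyRegular_concat_iff [] (q 0)).mp h'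
  rw [Fin.sum_univ_four] at hu
  obtain ⟨r, s, t, e3⟩ := mem_ofList3.mp
    (h3 (u 3) (mem_ofList3.mpr ⟨-u 0, -u 1, -u 2, by linear_combination hu⟩))
  have e2 := h2 (u 2 + t * q 3) (by
    rw [show (u 2 + t * q 3) * q 2 = -(u 0 + r * q 3) * q 0 + -(u 1 + s * q 3) * q 1 by
      linear_combination hu - q 3 * e3]
    exact add_mem (Ideal.mul_mem_left _ _ (Ideal.subset_span (by simp)))
      (Ideal.mul_mem_left _ _ (Ideal.subset_span (by simp))))
  simp only [Ideal.ofList_cons, Ideal.ofList_nil, sup_bot_eq, Submodule.mem_sup,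
    Ideal.mem_span_singleton'] at e2
  obtain ⟨_, ⟨a, rfl⟩, _, ⟨b, rfl⟩, e2⟩ := e2
  have e1 := h1 (u 1 + s * q 3 + b * q 2) (by
    rw [show (u 1 + s * q 3 + b * q 2) * q 1 = -(u 0 + r * q 3 + a * q 2) * q 0 by
      linear_combination hu - q 3 * e3 + q 2 * e2]
    exact Ideal.mul_mem_left _ _ (Ideal.subset_span (by simp)))
  simp only [Ideal.ofList_cons, Ideal.ofList_nil, sup_bot_eq,
    Ideal.mem_span_singleton'] at e1
  obtain ⟨c, e1⟩ := e1
  have e0 := h0 (u 0 + r * q 3 + a * q 2 + c * q 1) (by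
    simp only [Ideal.ofList_nil, Ideal.mem_bot]
    linear_combination hu - q 3 * e3 + q 2 * e2 + q 1 * e1)
  simp only [Ideal.ofList_nil, Ideal.mem_bot] at e0
  rw [mem_ofList4]
  fin_cases i
  · exact ⟨0, -c, -a, -r, by simp; linear_combination e0⟩
  · exact ⟨c, 0, -b, -s, by simp; linear_combination -e1⟩
  · exact ⟨a, b, 0, -t, by simp; linear_combination -e2⟩
  · exact ⟨r, s, t, 0, by simp; linear_combination e3⟩

lemma span_range_four {R : Type*} [CommRing R] (q : Fin 4 → R) :
    Ideal.ofList [q 0, q 1, q 2, q 3] = Ideal.span (Set.range q) := by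
  unfold Ideal.ofList
  congr 1
  ext y
  simp [Fin.exists_fin_succ, eq_comm]

/-- In a Noetherian local algebra over an infinite field, let `x` be a regular sequence of length
four and `Q = A x` with every `x i` in the radical of `(Q)`. Then the syzygies of `Q` have
coefficients in `(Q)`, and `det A ∉ (Q)`. -/
theorem complete_intersection_local {k R : Type*} [Field k] [Infinite k] [CommRing R]
    [IsLocalRing R] [IsNoetherianRing R] [Algebra k R] (x Q : Fin 4 → R)
    (A : Matrix (Fin 4) (Fin 4) R) (hQ : Q = A.mulVec x)
    (hxm : ∀ i, x i ∈ IsLocalRing.maximalIdeal R)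
    (hreg : IsWeaklyRegular R [x 3, x 2, x 1, x 0])
    (hrad : ∀ i, x i ∈ (Ideal.span (Set.range Q)).radical) :
    (∀ u : Fin 4 → R, ∑ i, u i * Q i = 0 → ∀ i, u i ∈ Ideal.span (Set.range Q)) ∧
      A.det ∉ Ideal.span (Set.range Q) := by
  have hQm : ∀ i, Q i ∈ IsLocalRing.maximalIdeal R := by
    intro i
    rw [hQ, Matrix.mulVec, dotProduct]
    exact sum_mem fun j _ => Ideal.mul_mem_left _ _ (hxm j)
  have hcm : ∀ c : Fin 4 → k, ∑ i, c i • Q i ∈ IsLocalRing.maximalIdeal R := fun c =>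
    sum_mem fun j _ => by
      rw [Algebra.smul_def]; exact Ideal.mul_mem_left _ _ (hQm j)
  have perm : ∀ {l l' : List R}, IsWeaklyRegular R l → l.Perm l' →
      (∀ r ∈ l, r ∈ IsLocalRing.maximalIdeal R) → IsWeaklyRegular R l' := fun h1 h2 h3 =>
    IsLocalRing.isWeaklyRegular_of_perm_of_subset_maximalIdeal h1 h2 h3
  obtain ⟨c0, r0⟩ := exists_exchange (k := k) Q [x 3, x 2, x 1] (x 0) (hrad 0) hreg
  set q0 := ∑ i, c0 i • Q i with hq0
  obtain ⟨c1, r1⟩ := exists_exchange (k := k) Q [x 3, x 2, q0] (x 1) (hrad 1)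
    (perm r0 (((List.Perm.swap _ _ []).cons _).cons _) (by
        simp only [List.cons_append, List.nil_append, List.forall_mem_cons]
        exact ⟨hxm _, hxm _, hxm _, hcm _, by simp⟩))
  set q1 := ∑ i, c1 i • Q i with hq1
  obtain ⟨c2, r2⟩ := exists_exchange (k := k) Q [x 3, q0, q1] (x 2) (hrad 2)
    (perm r1 ((List.perm_append_comm (l₁ := [x 2]) (l₂ := [q0, q1])).cons _)
      (by
        simp only [List.cons_append, List.nil_append, List.forall_mem_cons]
        exact ⟨hxm _, hxm _, hcm _, hcm _, by simp⟩))
  set q2 := ∑ i, c2 i • Q i with hq2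
  obtain ⟨c3, r3⟩ := exists_exchange (k := k) Q [q0, q1, q2] (x 3) (hrad 3)
    (perm r2 (List.perm_append_comm (l₁ := [x 3]) (l₂ := [q0, q1, q2]))
      (by
        simp only [List.cons_append, List.nil_append, List.forall_mem_cons]
        exact ⟨hxm _, hcm _, hcm _, hcm _, by simp⟩))
  set q3 := ∑ i, c3 i • Q i with hq3
  let C : Matrix (Fin 4) (Fin 4) k := ![c0, c1, c2, c3]
  let C' : Matrix (Fin 4) (Fin 4) R := C.map (algebraMap k R)
  let q : Fin 4 → R := C'.mulVec Q
  have hqC : ∀ i, q i = ∑ j, C i j • Q j := fun i => by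
    simp [q, C', Matrix.mulVec, dotProduct, Algebra.smul_def]
  have Q0 : q 0 = q0 := hqC 0
  have Q1 : q 1 = q1 := hqC 1
  have Q2 : q 2 = q2 := hqC 2
  have Q3 : q 3 = q3 := hqC 3
  rw [← Q0] at r0 r1 r2 r3
  rw [← Q1] at r1 r2 r3
  rw [← Q2] at r2 r3
  rw [← Q3] at r3
  have hqm : ∀ i, q i ∈ IsLocalRing.maximalIdeal R := fun i => by rw [hqC]; exact hcm _
  have hspan_le : Ideal.span (Set.range q) ≤ IsLocalRing.maximalIdeal R := by
    rw [Ideal.span_le]; rintro _ ⟨i, rfl⟩; exact hqm i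
  have syz := syzygy_mem q r3
  rw [span_range_four] at syz
  -- a scalar in the maximal ideal is zero, so a relation over `k` among the `q i` is trivial
  have hC : C.det ≠ 0 := by
    intro h0
    obtain ⟨v, hv, hvC⟩ := Matrix.exists_vecMul_eq_zero_iff.mpr h0
    apply hv
    funext i
    have hrel : ∑ i, algebraMap k R (v i) * q i = 0 := by
      have : ∑ i, algebraMap k R (v i) * q i =
          ∑ j, algebraMap k R (Matrix.vecMul v C j) * Q j := by
        simp only [hqC, Matrix.vecMul, dotProduct, map_sum, map_mul, Finset.sum_mul,
          Finset.mul_sum, Algebra.smul_def]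
        rw [Finset.sum_comm]
        simp only [mul_assoc]
      rw [this, hvC]; simp
    have hm := hspan_le (syz _ hrel i)
    by_contra hne
    exact (IsLocalRing.mem_maximalIdeal _).mp hm
      ((IsUnit.mk0 (v i) hne).map (algebraMap k R))
  have hC' : IsUnit C'.det := by
    have : C'.det = algebraMap k R C.det := ((algebraMap k R).map_det C).symm
    rw [this]
    exact (IsUnit.mk0 _ hC).map _
  have hQq : Q = C'⁻¹.mulVec q := by
    simp [q, Matrix.mulVec_mulVec, Matrix.nonsing_inv_mul _ hC']
  have hmul : ∀ (B : Matrix (Fin 4) (Fin 4) R) (y : Fin 4 → R),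
      Ideal.span (Set.range (B.mulVec y)) ≤ Ideal.span (Set.range y) := by
    intro B y
    rw [Ideal.span_le]
    rintro _ ⟨i, rfl⟩
    rw [Matrix.mulVec, dotProduct]
    exact sum_mem fun j _ => Ideal.mul_mem_left _ _ (Ideal.subset_span (Set.mem_range_self j))
  have hspan : Ideal.span (Set.range Q) = Ideal.span (Set.range q) :=
    le_antisymm (by conv_lhs => rw [hQq]
                    exact hmul _ _) (hmul _ _)
  rw [hspan]
  constructor
  · intro u hu i
    have h1 := syz (Matrix.vecMul u C'⁻¹) (by
      change Matrix.vecMul u C'⁻¹ ⬝ᵥ q = 0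
      rw [← Matrix.dotProduct_mulVec, ← hQq]; exact hu)
    have h2 : u = Matrix.vecMul (Matrix.vecMul u C'⁻¹) C' := by
      rw [Matrix.vecMul_vecMul, Matrix.nonsing_inv_mul _ hC', Matrix.vecMul_one]
    rw [h2, Matrix.vecMul, dotProduct]
    exact sum_mem fun j _ => Ideal.mul_mem_right _ _ (h1 j)
  · intro hdet
    have h1 := one_mem_of_det_mem x q (C' * A)
      (by rw [← Matrix.mulVec_mulVec, ← hQ])
      ((weaklyRegular_concat_iff _ _).mp r0).2 ((weaklyRegular_concat_iff _ _).mp r1).2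
      ((weaklyRegular_concat_iff _ _).mp r2).2 ((weaklyRegular_concat_iff _ _).mp r3).2
      (by rw [span_range_four, Matrix.det_mul]; exact Ideal.mul_mem_left _ _ hdet)
    have hle : Ideal.ofList [x 3, x 2, x 1, x 0] ≤ IsLocalRing.maximalIdeal R := by
      unfold Ideal.ofList
      rw [Ideal.span_le]
      intro y hy
      simp at hy
      rcases hy with rfl | rfl | rfl | rfl <;> exact hxm _
    exact (IsLocalRing.maximalIdeal R).ne_top_iff_one.mp
      (IsLocalRing.maximalIdeal.isMaximal R).ne_top (hle h1)

/-! ### The Jacobian determinant -/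

/-- The Jacobian determinant of four quaternary polynomials. -/
noncomputable def jacobian {K : Type*} [CommRing K] (Q : Fin 4 → MvPolynomial (Fin 4) K) :
    MvPolynomial (Fin 4) K :=
  Matrix.det (Matrix.of fun i j : Fin 4 => pderiv j (Q i))

/-- Cramer's rule for the Jacobian matrix, which by Euler's identity maps the vector of variables
to `2 Q`. -/
lemma X_mul_jacobian {K : Type*} [CommRing K] (Q : Fin 4 → MvPolynomial (Fin 4) K)
    (hQ : ∀ i, (Q i).IsHomogeneous 2) (k : Fin 4) :
    X k * jacobian Q = ∑ i, (Matrix.of fun i j : Fin 4 => pderiv j (Q i)).adjugate k i *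
      (2 * Q i) := by
  set B : Matrix (Fin 4) (Fin 4) (MvPolynomial (Fin 4) K) :=
    Matrix.of fun i j : Fin 4 => pderiv j (Q i) with hB
  have euler : B.mulVec X = fun i => 2 * Q i := by
    funext i
    have := (hQ i).sum_X_mul_pderiv
    simp only [Matrix.mulVec, dotProduct, hB, Matrix.of_apply]
    simpa [mul_comm] using this
  have := congrFun (congrArg (fun B => B.mulVec X) B.adjugate_mul) k
  simp only [← Matrix.mulVec_mulVec, euler] at this
  rw [Matrix.smul_mulVec, Matrix.one_mulVec] at this
  simp only [Pi.smul_apply, smul_eq_mul] at this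
  rw [mul_comm]
  exact this.symm

lemma X_mul_jacobian_mem {K : Type*} [CommRing K] (Q : Fin 4 → MvPolynomial (Fin 4) K)
    (hQ : ∀ i, (Q i).IsHomogeneous 2) (k : Fin 4) :
    X k * jacobian Q ∈ Ideal.span (Set.range Q) := by
  rw [X_mul_jacobian Q hQ]
  exact sum_mem fun i _ => Ideal.mul_mem_left _ _
    (Ideal.mul_mem_left _ _ (Ideal.subset_span (Set.mem_range_self i)))

/-- `xₖ ∂ₗJ ≡ δₖₗ J` modulo `(Q)`, obtained by differentiating `X_mul_jacobian`. -/
lemma X_mul_pderiv_jacobian_sub_mem {K : Type*} [CommRing K] (Q : Fin 4 → MvPolynomial (Fin 4) K)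
    (hQ : ∀ i, (Q i).IsHomogeneous 2) (k l : Fin 4) :
    X k * pderiv l (jacobian Q) - (if k = l then jacobian Q else 0) ∈
      Ideal.span (Set.range Q) := by
  have h1 := X_mul_jacobian Q hQ k
  set B : Matrix (Fin 4) (Fin 4) (MvPolynomial (Fin 4) K) :=
    Matrix.of fun i j : Fin 4 => pderiv j (Q i) with hB
  have h2 : ∑ i, B.adjugate k i * pderiv l (Q i) = if k = l then jacobian Q else 0 := by
    have := congrFun (congrFun B.adjugate_mul k) l
    rw [Matrix.mul_apply] at this
    simpa [Matrix.one_apply, hB, jacobian] using this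
  have h3 := congrArg (pderiv l) h1
  have h4 : ∀ i, pderiv l (B.adjugate k i * (2 * Q i)) =
      2 * pderiv l (B.adjugate k i) * Q i + 2 * (B.adjugate k i * pderiv l (Q i)) := by
    intro i
    rw [show B.adjugate k i * (2 * Q i) = 2 • (B.adjugate k i * Q i) by rw [two_nsmul]; ring]
    rw [map_nsmul, Derivation.leibniz]
    simp only [smul_eq_mul, two_nsmul]
    ring
  simp only [map_sum, h4, Finset.sum_add_distrib, ← Finset.mul_sum, h2] at h3
  rw [Derivation.leibniz, pderiv_X] at h3
  have h5 : X k * pderiv l (jacobian Q) - (if k = l then jacobian Q else 0) =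
      ∑ i, 2 * pderiv l (B.adjugate k i) * Q i := by
    simp only [smul_eq_mul] at h3
    by_cases hkl : k = l
    · subst hkl
      simp only [Pi.single_eq_same, if_true] at h3 ⊢
      linear_combination h3
    · simp only [Pi.single_apply, hkl, if_false] at h3 ⊢
      linear_combination h3
  rw [h5]
  exact sum_mem fun i _ => Ideal.mul_mem_left _ _ (Ideal.subset_span (Set.mem_range_self i))

/-- Elements of an ideal generated by quadratic forms have no linear part. -/
lemma eval_pderiv_eq_zero {K : Type*} [Field K] (Q : Fin 4 → MvPolynomial (Fin 4) K)
    (hQ : ∀ i, (Q i).IsHomogeneous 2) (f : MvPolynomial (Fin 4) K)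
    (hf : f ∈ Ideal.span (Set.range Q)) (j : Fin 4) : eval 0 (pderiv j f) = 0 := by
  have ev : ∀ (n : ℕ) (g : MvPolynomial (Fin 4) K), n ≠ 0 → g.IsHomogeneous n → eval 0 g = 0 := by
    intro n g hn hg
    rw [show eval (0 : Fin 4 → K) g = coeff 0 g by rw [← constantCoeff_eq, eval_zero]]
    exact hg.coeff_eq_zero (by simpa using hn.symm)
  obtain ⟨g, rfl⟩ := Ideal.mem_span_range_iff_exists_fun.mp hf
  simp only [map_sum, Derivation.leibniz, smul_eq_mul, map_add, map_mul]
  refine Finset.sum_eq_zero fun i _ => ?_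
  rw [ev 2 _ (by simp) (hQ i), ev 1 _ (by simp) (hQ i).pderiv]
  simp

/-- Four quadrics without common nontrivial zero: the Jacobian determinant is not in `(Q)`, and
a syzygy whose coefficients all vanish at the origin has coefficients without linear part. -/
theorem complete_intersection (Q : Fin 4 → MvPolynomial (Fin 4) ℂ)
    (hQ : ∀ i, (Q i).IsHomogeneous 2)
    (hno : ∀ p : Fin 4 → ℂ, (∀ i, eval p (Q i) = 0) → p = 0) :
    jacobian Q ∉ Ideal.span (Set.range Q) ∧
    ∀ L : Fin 4 → MvPolynomial (Fin 4) ℂ, (∀ i, eval 0 (L i) = 0) → ∑ i, L i * Q i = 0 →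
      ∀ i j, eval 0 (pderiv j (L i)) = 0 := by
  let S := MvPolynomial (Fin 4) ℂ
  let m : Ideal S := RingHom.ker (eval (0 : Fin 4 → ℂ))
  have hmp : m.IsPrime := RingHom.ker_isPrime _
  let R := Localization.AtPrime m
  let φ : S →+* R := algebraMap S R
  have : IsNoetherianRing R := IsLocalization.isNoetherianRing m.primeCompl R inferInstance
  let A : Matrix (Fin 4) (Fin 4) S := Matrix.of fun i j => C (2⁻¹ : ℂ) * pderiv j (Q i)
  have hA : Q = A.mulVec X := by
    funext i
    have h := (hQ i).sum_X_mul_pderiv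
    simp only [Matrix.mulVec, dotProduct, A, Matrix.of_apply]
    have h2 : (C (2⁻¹ : ℂ) : S) * 2 = 1 := by
      rw [show (2 : S) = C 2 from (map_ofNat C 2).symm, ← C_mul]; simp
    calc Q i = C (2⁻¹ : ℂ) * (2 • Q i) := by
          rw [two_nsmul, ← two_mul, ← mul_assoc, h2, one_mul]
      _ = _ := by rw [← h, Finset.mul_sum]; exact Finset.sum_congr rfl fun j _ => by ring
  have hspan : Ideal.span (Set.range fun i => φ (Q i)) = (Ideal.span (Set.range Q)).map φ := by
    rw [Ideal.map_span, ← Set.range_comp]; rfl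
  have hrad : ∀ i, (X i : S) ∈ (Ideal.span (Set.range Q)).radical := by
    intro i
    rw [← vanishingIdeal_zeroLocus_eq_radical (K := ℂ)]
    intro p hp
    have : p = 0 := hno p fun j => by
      have := hp (Q j) (Ideal.subset_span (Set.mem_range_self j))
      simpa [aeval_eq_eval] using this
    simp [this]
  have hloc := complete_intersection_local (k := ℂ) (fun i => φ (X i)) (fun i => φ (Q i))
    (A.map φ) (by
      funext i
      conv_lhs => rw [hA]
      simp [Matrix.mulVec, dotProduct])
    (fun i => by
      rw [← Localization.AtPrime.map_eq_maximalIdeal]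
      exact Ideal.mem_map_of_mem _ (by
        rw [RingHom.mem_ker, eval_X, Pi.zero_apply]))
    ((weaklyRegular_X ℂ).of_isLocalization R m.primeCompl)
    (fun i => by
      rw [hspan]
      obtain ⟨n, hn⟩ := hrad i
      exact ⟨n, by rw [← map_pow]; exact Ideal.mem_map_of_mem _ hn⟩)
  rw [hspan] at hloc
  constructor
  · intro hJ
    apply hloc.2
    have : (A.map φ).det = φ A.det := (φ.map_det A).symm
    rw [this]
    apply Ideal.mem_map_of_mem
    have : A = (C (2⁻¹ : ℂ) : S) • (Matrix.of fun i j : Fin 4 => pderiv j (Q i)) := by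
      ext1 i j; simp [A]
    rw [this, Matrix.det_smul]
    exact Ideal.mul_mem_left _ _ hJ
  · intro L hL hrel i j
    have h1 := hloc.1 (fun i => φ (L i)) (by
      simpa using congrArg φ hrel) i
    rw [IsLocalization.algebraMap_mem_map_algebraMap_iff m.primeCompl] at h1
    -- `s * L i ∈ (Q)` with `s` nonvanishing at the origin
    obtain ⟨s, hs, h1⟩ := h1
    have h2 := eval_pderiv_eq_zero Q hQ _ h1 j
    rw [Derivation.leibniz] at h2
    simp only [smul_eq_mul, map_add, map_mul, hL i, zero_mul, add_zero] at h2
    exact (mul_eq_zero.mp h2).resolve_left hs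

/-! ### The rows of Nanson's matrix -/

lemma nansonRow_mul {K : Type*} [CommRing K] (Q : Fin 4 → MvPolynomial (Fin 4) K) (i j : Fin 4) :
    nansonRow Q (Fin.castAdd 4 (finProdFinEquiv (i, j))) = X j * Q i := by
  have h1 : ((j : ℕ) + 4 * i) % 4 = j := by omega
  have h2 : ((j : ℕ) + 4 * i) / 4 = i := by omega
  have h3 : (j : ℕ) + 4 * i < 16 := by omega
  have hv : ((Fin.castAdd 4 (finProdFinEquiv (i, j)) : Fin 20) : ℕ) = j + 4 * i := rfl
  simp only [nansonRow, hv, h1, h2, h3, dif_pos]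

lemma nansonRow_pderiv {K : Type*} [CommRing K] (Q : Fin 4 → MvPolynomial (Fin 4) K) (l : Fin 4) :
    nansonRow Q (Fin.natAdd 16 l) = pderiv l (jacobian Q) := by
  simp [nansonRow, jacobian]

lemma forall_nansonRow {K : Type*} [CommRing K] (Q : Fin 4 → MvPolynomial (Fin 4) K)
    {P : MvPolynomial (Fin 4) K → Prop} (h1 : ∀ i j, P (X j * Q i))
    (h2 : ∀ l, P (pderiv l (jacobian Q))) (r : Fin 20) : P (nansonRow Q r) := by
  induction r using Fin.addCases (m := 16) (n := 4) with
  | left r =>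
    obtain ⟨⟨i, j⟩, rfl⟩ := (finProdFinEquiv (m := 4) (n := 4)).surjective r
    rw [nansonRow_mul]; exact h1 i j
  | right l => rw [nansonRow_pderiv]; exact h2 l

lemma jacobian_isHomogeneous {K : Type*} [CommRing K] (Q : Fin 4 → MvPolynomial (Fin 4) K)
    (hQ : ∀ i, (Q i).IsHomogeneous 2) : (jacobian Q).IsHomogeneous 4 := by
  rw [jacobian, Matrix.det_apply]
  refine IsHomogeneous.sum _ _ _ fun σ _ => ?_
  have : (∏ i, (Matrix.of fun i j : Fin 4 => pderiv j (Q i)) (σ i) i).IsHomogeneous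
      (∑ _i : Fin 4, 1) := IsHomogeneous.prod _ _ _ fun i _ => (hQ (σ i)).pderiv
  rcases Int.units_eq_one_or (Equiv.Perm.sign σ) with h | h <;> rw [h]
  · simpa using this
  · simpa using this.neg

lemma nansonRow_isHomogeneous {K : Type*} [CommRing K] (Q : Fin 4 → MvPolynomial (Fin 4) K)
    (hQ : ∀ i, (Q i).IsHomogeneous 2) (r : Fin 20) : (nansonRow Q r).IsHomogeneous 3 :=
  forall_nansonRow Q (P := fun f => f.IsHomogeneous 3)
    (fun i j => (isHomogeneous_X _ j).mul (hQ i))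
    (fun _ => (jacobian_isHomogeneous Q hQ).pderiv) r

lemma cubicExp_injective : Function.Injective cubicExp := by
  intro a b h
  have h' := Finsupp.equivFunOnFinite.symm.injective h
  clear h
  revert a b
  decide

lemma exists_cubicExp (d : Fin 4 →₀ ℕ) (hd : d.degree = 3) : ∃ c, cubicExp c = d := by
  rw [Finsupp.degree_eq_sum, Fin.sum_univ_four] at hd
  have key : ∀ a b c e : Fin 4, (a : ℕ) + b + c + e = 3 → ∃ m : Fin 20,
      (![![3,0,0,0], ![2,1,0,0], ![2,0,1,0], ![2,0,0,1],
       ![1,2,0,0], ![1,1,1,0], ![1,1,0,1], ![1,0,2,0], ![1,0,1,1], ![1,0,0,2],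
       ![0,3,0,0], ![0,2,1,0], ![0,2,0,1], ![0,1,2,0], ![0,1,1,1], ![0,1,0,2],
       ![0,0,3,0], ![0,0,2,1], ![0,0,1,2], ![0,0,0,3]] : Fin 20 → Fin 4 → ℕ) m =
      ![(a : ℕ), b, c, e] := by decide
  obtain ⟨m, hm⟩ := key ⟨d 0, by omega⟩ ⟨d 1, by omega⟩ ⟨d 2, by omega⟩ ⟨d 3, by omega⟩ hd
  refine ⟨m, ?_⟩
  rw [cubicExp, hm]
  ext i
  fin_cases i <;> rfl

lemma eq_zero_of_coeff_cubicExp {K : Type*} [CommRing K] (f : MvPolynomial (Fin 4) K)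
    (hf : f.IsHomogeneous 3) (h : ∀ c, coeff (cubicExp c) f = 0) : f = 0 := by
  ext d
  rw [coeff_zero]
  by_cases hd : d.degree = 3
  · obtain ⟨c, rfl⟩ := exists_cubicExp d hd
    exact h c
  · exact hf.coeff_eq_zero hd

lemma eval_eq_sum_cubicExp {K : Type*} [CommRing K] (f : MvPolynomial (Fin 4) K)
    (hf : f.IsHomogeneous 3) (p : Fin 4 → K) :
    eval p f = ∑ c, coeff (cubicExp c) f * ∏ i, p i ^ cubicExp c i := by
  classical
  rw [eval_eq', ← Finset.sum_image (s := Finset.univ) (g := cubicExp)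
    (f := fun d => coeff d f * ∏ i, p i ^ d i) cubicExp_injective.injOn]
  refine Finset.sum_subset (fun d hd => ?_) (fun d _ hd => ?_)
  · have : d.degree = 3 := by
      by_contra hne
      exact (mem_support_iff.mp hd) (hf.coeff_eq_zero hne)
    obtain ⟨c, rfl⟩ := exists_cubicExp d this
    exact Finset.mem_image_of_mem _ (Finset.mem_univ c)
  · rw [notMem_support_iff.mp hd, zero_mul]

lemma eval_nansonRow_eq_zero {K : Type*} [Field K] (Q : Fin 4 → MvPolynomial (Fin 4) K)
    (hQ : ∀ i, (Q i).IsHomogeneous 2) (p : Fin 4 → K) (hp : p ≠ 0)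
    (hz : ∀ i, eval p (Q i) = 0) (r : Fin 20) : eval p (nansonRow Q r) = 0 := by
  have hI : ∀ f ∈ Ideal.span (Set.range Q), eval p f = 0 := by
    have : Ideal.span (Set.range Q) ≤ RingHom.ker (eval p) := by
      rw [Ideal.span_le]; rintro _ ⟨i, rfl⟩; exact hz i
    exact this
  obtain ⟨k, hk⟩ := Function.ne_iff.mp hp
  have hJ : eval p (jacobian Q) = 0 := by
    have := hI _ (X_mul_jacobian_mem Q hQ k)
    rw [map_mul, eval_X] at this
    exact (mul_eq_zero.mp this).resolve_left hk
  refine forall_nansonRow Q (P := fun f => eval p f = 0) (fun i j => ?_) (fun l => ?_) r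
  · rw [map_mul, hz, mul_zero]
  · have := hI _ (X_mul_pderiv_jacobian_sub_mem Q hQ k l)
    rw [map_sub, apply_ite (eval p), hJ, map_zero, ite_self, sub_zero, map_mul, eval_X] at this
    exact (mul_eq_zero.mp this).resolve_left hk

/-- Without a common nontrivial zero, the twenty cubics are linearly independent. -/
lemma nansonRow_relation_trivial (Q : Fin 4 → MvPolynomial (Fin 4) ℂ)
    (hQ : ∀ i, (Q i).IsHomogeneous 2)
    (hno : ∀ p : Fin 4 → ℂ, (∀ i, eval p (Q i) = 0) → p = 0)
    (v : Fin 20 → ℂ) (hv : ∑ r, C (v r) * nansonRow Q r = 0) : v = 0 := by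
  obtain ⟨hJ, hsyz⟩ := complete_intersection Q hQ hno
  let a : Fin 4 → Fin 4 → ℂ := fun i j => v (Fin.castAdd 4 (finProdFinEquiv (i, j)))
  let b : Fin 4 → ℂ := fun l => v (Fin.natAdd 16 l)
  let L : Fin 4 → MvPolynomial (Fin 4) ℂ := fun i => ∑ j, C (a i j) * X j
  have hrel : ∑ i, L i * Q i + ∑ l, C (b l) * pderiv l (jacobian Q) = 0 := by
    rw [← hv, Fin.sum_univ_add (a := 16) (b := 4)]
    congr 1
    rw [← Equiv.sum_comp (finProdFinEquiv (m := 4) (n := 4)), Fintype.sum_prod_type]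
    simp only [nansonRow_mul, L, Finset.sum_mul, mul_assoc, a]
  have hb : ∀ k, b k = 0 := by
    intro k
    by_contra hk
    apply hJ
    have h1 : C (b k) * jacobian Q ∈ Ideal.span (Set.range Q) := by
      have h2 : C (b k) * jacobian Q = -(∑ i, X k * L i * Q i + ∑ l, C (b l) *
          (X k * pderiv l (jacobian Q) - (if k = l then jacobian Q else 0))) := by
        simp only [mul_sub, Finset.sum_sub_distrib, mul_ite, mul_zero, Finset.sum_ite_eq,
          Finset.mem_univ, if_true]
        have h3 := congrArg (X k * ·) hrel
        simp only [mul_add, Finset.mul_sum, mul_zero] at h3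
        simp only [mul_assoc, mul_left_comm (C _) (X k)]
        linear_combination h3
      rw [h2]
      refine neg_mem (add_mem (sum_mem fun i _ => ?_) (sum_mem fun l _ => ?_))
      · exact Ideal.mul_mem_left _ _ (Ideal.subset_span (Set.mem_range_self i))
      · exact Ideal.mul_mem_left _ _ (X_mul_pderiv_jacobian_sub_mem Q hQ k l)
    have h4 := Ideal.mul_mem_left _ (C (b k)⁻¹) h1
    rwa [← mul_assoc, ← C_mul, inv_mul_cancel₀ hk, C_1, one_mul] at h4
  have ha : ∀ i j, a i j = 0 := by
    intro i j
    have h1 := hsyz L (fun i => by simp [L]) (by simpa [hb] using hrel) i j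
    simpa [L, pderiv_X, Pi.single_apply] using h1
  funext r
  induction r using Fin.addCases (m := 16) (n := 4) with
  | left r =>
    obtain ⟨⟨i, j⟩, rfl⟩ := (finProdFinEquiv (m := 4) (n := 4)).surjective r
    exact ha i j
  | right l => exact hb l

/-- **Nanson's theorem.** The determinant of Nanson's 20 × 20 matrix of four quaternary
quadratic forms over ℂ vanishes if and only if the four quadrics have a common
nontrivial zero (it is the resultant of the four quadrics). -/
theorem nanson_det_eq_zero_iff_common_zero
    (Q : Fin 4 → MvPolynomial (Fin 4) ℂ) (hQ : ∀ i, (Q i).IsHomogeneous 2) :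
    (nansonMatrix Q).det = 0 ↔
      ∃ p : Fin 4 → ℂ, p ≠ 0 ∧ ∀ i, eval p (Q i) = 0 := by
  constructor
  · intro hdet
    by_contra hno
    push Not at hno
    obtain ⟨v, hv, hvM⟩ := Matrix.exists_vecMul_eq_zero_iff.mpr hdet
    refine hv (nansonRow_relation_trivial Q hQ (fun p hp => ?_) v ?_)
    · by_contra hp0
      obtain ⟨i, hi⟩ := hno p hp0
      exact hi (hp i)
    · refine eq_zero_of_coeff_cubicExp _ (IsHomogeneous.sum _ _ _ fun r _ => ?_) fun c => ?_
      · simpa using (isHomogeneous_C _ (v r)).mul (nansonRow_isHomogeneous Q hQ r)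
      · have := congrFun hvM c
        simpa [Matrix.vecMul, dotProduct, nansonMatrix, coeff_sum, coeff_C_mul] using this
  · rintro ⟨p, hp, hz⟩
    refine Matrix.exists_mulVec_eq_zero_iff.mp
      ⟨fun c => ∏ i, p i ^ cubicExp c i, fun h0 => hp ?_, ?_⟩
    · funext k
      obtain ⟨c, hc⟩ := exists_cubicExp (Finsupp.single k 3) (by simp)
      have := congrFun h0 c
      simpa [hc, Finsupp.single_apply, Finset.prod_eq_single k, Finset.prod_ite_eq,
        pow_ite] using this
    · funext r
      have := eval_nansonRow_eq_zero Q hQ p hp hz r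
      rw [eval_eq_sum_cubicExp _ (nansonRow_isHomogeneous Q hQ r)] at this
      exact this
end

section
/- Let a_0, …, a_11 ∈ ℂ and let F = a_0x_0x_1^2 + a_1x_0x_1x_2 + a_2x_0x_1x_3 + a_3x_0x_2^2 + a_4x_0x_2x_3 + a_5x_1^3 + a_6x_1^2x_2 + a_7x_1x_2^2 + a_8x_1x_2x_3 + a_9x_1^2x_3 + a_10x_2^3 + a_11x_2^2x_3 be a cubic form in binodal normal form. Then every 19×19 minor of the Nanson matrix M(F) of the four partial derivatives of F vanishes; equivalently, M(F) has rank at most 18. In other words, the binodal normal form family N_2^{nf} is contained in V_2. -/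
/-!
Both nodes `e₀ = (1:0:0:0)` and `e₃ = (0:0:0:1)` are common zeros of the partial derivatives
`Qᵢ` of `F`. A classical fact about quadrics says that at a common zero `p` of the `Qᵢ` all first
partial derivatives of the Jacobian determinant `J` vanish as well: differentiating the identity
`xₖ J = 2 ∑ᵢ adj(k,i) Qᵢ`, which follows from Euler's relation, and evaluating at `p` gives
`pₖ ∂ⱼJ(p) = 0` (`map_pderiv_jacobian_eq_zero`). Hence all twenty cubics vanish at `e₀` and `e₃`,
that is, the columns of the Nanson matrix belonging to `x₀³` and `x₃³` are zero. At most eighteen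
columns remain, which bounds the rank and kills the minors.

Instead of evaluating at the point `eₖ`, the proof restricts to the line through it, by the
homomorphism `xₖ ↦ T`, `xᵢ ↦ 0` for `i ≠ k`, into `ℂ[T]`; this reads off the coefficient of `xₖ³`
without any appeal to homogeneity of the cubics.
-/

open MvPolynomial

/-- Restriction of a polynomial to the `k`-th coordinate axis, as a polynomial in one variable. -/
noncomputable def axisRestrict (k : Fin 4) : MvPolynomial (Fin 4) ℂ →ₐ[ℂ] Polynomial ℂ :=
  aeval (Pi.single k Polynomial.X)

theorem coeff_axisRestrict (k : Fin 4) (n : ℕ) (p : MvPolynomial (Fin 4) ℂ) :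
    (axisRestrict k p).coeff n = coeff (Finsupp.single k n) p := by
  induction p using MvPolynomial.induction_on' with
  | add p q hp hq => simp [hp, hq]
  | monomial m c =>
    rw [axisRestrict, aeval_monomial, coeff_monomial, Polynomial.algebraMap_eq,
      Polynomial.coeff_C_mul, Finsupp.prod_fintype _ _ (fun _ => pow_zero _)]
    by_cases h : ∃ i, i ≠ k ∧ m i ≠ 0
    · obtain ⟨i, hik, hi⟩ := h
      rw [Finset.prod_eq_zero (Finset.mem_univ i) (by simp [hik, hi]), if_neg]
      · simp
      · rintro rfl
        exact hi (by simp [hik.symm])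
    · push Not at h
      have hm : m = Finsupp.single k (m k) := by
        ext i
        by_cases hik : i = k
        · subst hik; simp
        · simp [h i hik, Ne.symm hik]
      rw [Finset.prod_eq_single k (fun i _ hik => by simp [h i hik]) (by simp)]
      rw [hm]
      simp [Polynomial.coeff_X_pow, eq_comm, (Finsupp.single_injective k).eq_iff]

theorem pderiv_ofNat {K : Type*} [CommRing K] (j : Fin 4) (n : ℕ) [n.AtLeastTwo] :
    pderiv j (OfNat.ofNat n : MvPolynomial (Fin 4) K) = 0 := by
  rw [← map_ofNat (C : K →+* _) n, pderiv_C]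

/-- At a common zero of four quadrics (a homomorphism `φ` to a domain that kills them, with some
nonzero coordinate `φ xₖ`), the first partial derivatives of their Jacobian determinant vanish.
The quadrics enter only through Euler's relation. -/
theorem map_pderiv_jacobian_eq_zero {K R : Type*} [CommRing K] [CommRing R] [IsDomain R]
    (Q : Fin 4 → MvPolynomial (Fin 4) K) (hE : ∀ i, ∑ j, X j * pderiv j (Q i) = 2 * Q i)
    (φ : MvPolynomial (Fin 4) K →+* R) (hφ : ∀ i, φ (Q i) = 0) (k : Fin 4) (hk : φ (X k) ≠ 0)
    (j : Fin 4) :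
    φ (pderiv j (Matrix.det (Matrix.of fun i j : Fin 4 => pderiv j (Q i)))) = 0 := by
  set M : Matrix (Fin 4) (Fin 4) (MvPolynomial (Fin 4) K) :=
    Matrix.of fun i j : Fin 4 => pderiv j (Q i) with hM
  have hMX : M.mulVec X = fun i => 2 * Q i := by
    ext1 i
    rw [← hE i]
    simp [Matrix.mulVec, dotProduct, hM, mul_comm]
  have key : M.det * X k = ∑ i, M.adjugate k i * (2 * Q i) := by
    have h : M.adjugate.mulVec (M.mulVec X) = M.det • X := by
      rw [Matrix.mulVec_mulVec, Matrix.adjugate_mul, Matrix.smul_mulVec, Matrix.one_mulVec]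
    rw [hMX] at h
    exact (congrFun h k).symm
  have hdet : φ M.det = 0 := by
    have h := congrArg φ key
    simp only [map_mul, map_sum, hφ, mul_zero, Finset.sum_const_zero] at h
    exact (mul_eq_zero.mp h).resolve_right hk
  have hadj : ∑ i, M.adjugate k i * pderiv j (Q i) = M.det * (1 : Matrix _ _ _) k j := by
    simpa [Matrix.mul_apply, hM] using congrFun (congrFun (Matrix.adjugate_mul M) k) j
  have hadj' : ∑ i, φ (M.adjugate k i) * φ (pderiv j (Q i)) = 0 := by
    have h := congrArg φ hadj
    simpa only [map_mul, map_sum, hdet, zero_mul] using h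
  have hd := congrArg φ (congrArg (pderiv j) key)
  have h2 : pderiv j (2 : MvPolynomial (Fin 4) K) = 0 := pderiv_ofNat j 2
  have hterm : ∀ i, φ (pderiv j (M.adjugate k i * (2 * Q i)))
      = 2 * (φ (M.adjugate k i) * φ (pderiv j (Q i))) := by
    intro i
    simp only [Derivation.leibniz, smul_eq_mul, map_add, map_mul, hφ, h2, map_zero, map_ofNat]
    ring
  rw [map_sum, map_sum, Finset.sum_congr rfl (fun i _ => hterm i), ← Finset.mul_sum, hadj'] at hd
  simp only [Derivation.leibniz, smul_eq_mul, map_add, map_mul, hdet, zero_mul, mul_zero,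
    zero_add] at hd
  exact (mul_eq_zero.mp hd).resolve_left hk

theorem coeff_nansonRow_eq_zero (Q : Fin 4 → MvPolynomial (Fin 4) ℂ)
    (hE : ∀ i, ∑ j, X j * pderiv j (Q i) = 2 * Q i) (k : Fin 4)
    (hQ : ∀ i, axisRestrict k (Q i) = 0) (r : Fin 20) :
    coeff (Finsupp.single k 3) (nansonRow Q r) = 0 := by
  rw [← coeff_axisRestrict]
  unfold nansonRow
  split_ifs with h
  · simp [hQ]
  · have := map_pderiv_jacobian_eq_zero Q hE (axisRestrict k).toRingHom hQ k
      (by simp [axisRestrict]) ⟨(r : ℕ) - 16, by omega⟩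
    exact (congrArg (Polynomial.coeff · 3) this).trans (Polynomial.coeff_zero 3)

theorem cubicExp_zero : cubicExp 0 = Finsupp.single 0 3 := by
  ext i
  fin_cases i <;> simp [cubicExp]

theorem cubicExp_nineteen : cubicExp 19 = Finsupp.single 3 3 := by
  ext i
  fin_cases i <;> simp [cubicExp]

theorem rank_le_of_two_zero_cols (A : Matrix (Fin 20) (Fin 20) ℂ)
    (h0 : ∀ r, A r 0 = 0) (h19 : ∀ r, A r 19 = 0) : A.rank ≤ 18 := by
  classical
  let S : Finset (Fin 20 → ℂ) := (({0, 19} : Finset (Fin 20))ᶜ).image A.col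
  have hS : S.card ≤ 18 := Finset.card_image_le.trans (by decide)
  rw [Matrix.rank_eq_finrank_span_cols]
  have hle : Submodule.span ℂ (Set.range A.col) ≤ Submodule.span ℂ (S : Set (Fin 20 → ℂ)) := by
    rw [Submodule.span_le]
    rintro _ ⟨c, rfl⟩
    by_cases hc : c ∈ ({0, 19} : Finset (Fin 20))
    · have : A.col c = 0 := by
        ext r
        simp only [Finset.mem_insert, Finset.mem_singleton] at hc
        rcases hc with rfl | rfl
        · exact h0 r
        · exact h19 r
      rw [this]
      exact Submodule.zero_mem _
    · exact Submodule.subset_span (Finset.mem_coe.mpr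
        (Finset.mem_image_of_mem _ (Finset.mem_compl.mpr hc)))
  exact (Submodule.finrank_mono hle).trans ((finrank_span_finset_le_card S).trans hS)

theorem minor_eq_zero_of_two_zero_cols (A : Matrix (Fin 20) (Fin 20) ℂ)
    (h0 : ∀ r, A r 0 = 0) (h19 : ∀ r, A r 19 = 0) (r c : Fin 19 → Fin 20) :
    (A.submatrix r c).det = 0 := by
  by_cases hc : ∃ j, c j ∈ ({0, 19} : Finset (Fin 20))
  · obtain ⟨j, hj⟩ := hc
    refine Matrix.det_eq_zero_of_column_eq_zero j fun i => ?_
    simp only [Finset.mem_insert, Finset.mem_singleton] at hj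
    rcases hj with hj | hj
    · simp [hj, h0]
    · simp [hj, h19]
  · push Not at hc
    -- The 19 selected columns lie among the 18 remaining ones, so one of them is repeated.
    obtain ⟨i, -, j, -, hij, he⟩ := Finset.exists_ne_map_eq_of_card_lt_of_maps_to
      (s := Finset.univ) (t := (({0, 19} : Finset (Fin 20))ᶜ)) (f := c) (by decide)
      (fun j _ => Finset.mem_coe.mpr (Finset.mem_compl.mpr (hc j)))
    exact Matrix.det_zero_of_column_eq hij fun k => by simp [he]

/-- For a cubic surface in binodal normal form (singular at `(1:0:0:0)` and `(0:0:0:1)`),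
all 19 × 19 minors of the Nanson matrix of its partial derivatives vanish; equivalently
the Nanson matrix has rank at most 18.  That is, `N₂ⁿᶠ ⊆ V₂`. -/
theorem binodal_normal_form_in_V2 (a : Fin 12 → ℂ) (F : MvPolynomial (Fin 4) ℂ)
    (hF : F = C (a 0) * (X 0 * X 1 ^ 2) + C (a 1) * (X 0 * X 1 * X 2) +
      C (a 2) * (X 0 * X 1 * X 3) + C (a 3) * (X 0 * X 2 ^ 2) +
      C (a 4) * (X 0 * X 2 * X 3) + C (a 5) * (X 1 ^ 3) +
      C (a 6) * (X 1 ^ 2 * X 2) + C (a 7) * (X 1 * X 2 ^ 2) +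
      C (a 8) * (X 1 * X 2 * X 3) + C (a 9) * (X 1 ^ 2 * X 3) +
      C (a 10) * (X 2 ^ 3) + C (a 11) * (X 2 ^ 2 * X 3)) :
    (∀ r c : Fin 19 → Fin 20,
        ((nansonMatrix fun i => pderiv i F).submatrix r c).det = 0) ∧
      (nansonMatrix fun i => pderiv i F).rank ≤ 18 := by
  have hom : ∀ i, ∑ j, X j * pderiv j (pderiv i F) = 2 * pderiv i F := by
    have h2 (j : Fin 4) : pderiv j (2 : MvPolynomial (Fin 4) ℂ) = 0 := pderiv_ofNat j 2
    have h3 (j : Fin 4) : pderiv j (3 : MvPolynomial (Fin 4) ℂ) = 0 := pderiv_ofNat j 3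
    subst hF
    intro i
    fin_cases i <;>
    · simp [Fin.sum_univ_four, Derivation.leibniz, Derivation.leibniz_pow, pderiv_X,
        Pi.single_apply, h2, h3]
      ring
  have hz : ∀ k : Fin 4, k = 0 ∨ k = 3 → ∀ i, axisRestrict k (pderiv i F) = 0 := by
    subst hF
    rintro k (rfl | rfl) i <;> fin_cases i <;>
    simp [axisRestrict, Derivation.leibniz, Derivation.leibniz_pow, pderiv_X]
  have h0 : ∀ r, (nansonMatrix fun i => pderiv i F) r 0 = 0 := fun r => by
    simpa [nansonMatrix, cubicExp_zero] using
      coeff_nansonRow_eq_zero _ hom 0 (hz 0 (Or.inl rfl)) r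
  have h19 : ∀ r, (nansonMatrix fun i => pderiv i F) r 19 = 0 := fun r => by
    simpa [nansonMatrix, cubicExp_nineteen] using
      coeff_nansonRow_eq_zero _ hom 3 (hz 3 (Or.inr rfl)) r
  exact ⟨minor_eq_zero_of_two_zero_cols _ h0 h19, rank_le_of_two_zero_cols _ h0 h19⟩
end
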